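/- Let K be a field of characteristic zero, s ≥ 1, and let A be a commutative associative unital K-algebra. Then the following are equivalent: (i) there exist s nonzero pairwise commuting locally nilpotent K-derivations δ_1, …, δ_s of A with generic kernels such that ∩_{i=1}^s ker δ_i = K·1; (ii) A is isomorphic as a K-algebra to the polynomial ring K[X_1, …, X_s] in s variables. -/

import Mathlib

/-- A `K`-derivation of a `K`-algebra `A` (as a predicate on linear maps). -/
def IsDerivation {K A : Type*} [CommRing K] [Ring A] [Algebra K A]
    (δ : A →ₗ[K] A) : Prop :=
  ∀ a b : A, δ (a * b) = δ a * b + a * δ b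

/-- Derivations have *generic kernels* if distinct subsets `I ⊆ {1,…,s}` give
distinct intersections `∩_{i ∈ I} ker δ_i`. -/
def GenericKernels {K A : Type*} [CommRing K] [Ring A] [Algebra K A]
    {s : ℕ} (δ : Fin s → (A →ₗ[K] A)) : Prop :=
  ∀ I J : Set (Fin s),
    (⨅ i ∈ I, LinearMap.ker (δ i)) = (⨅ i ∈ J, LinearMap.ker (δ i)) → I = J

/-!
In characteristic zero a nonzero ideal of `K[X_i]` stable under all `∂ i` is the whole ring: a
nonzero element of least total degree has zero gradient, so it is a nonzero scalar.

Given the derivations, genericity yields for each `i` an element killed by every `δ j` with `j ≠ i`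
but not by `δ i`. Iterating `δ i` on it until just before it enters `⋂ ker δ j = K`, and rescaling,
gives `x i` with `δ j (x i)` equal to `1` for `j = i` and to `0` otherwise. The evaluation
`K[X_i] → A`, `X i ↦ x i`, carries `∂ i` to `δ i`; its kernel is stable under all `∂ i`, hence zero.
It is onto because `x i` is a slice of `δ i`: any subalgebra `C ∋ x i` stable under `δ i` is
generated by `x i` over `C ∩ ker δ i`, so the indices can be removed one at a time until only
`⋂ ker δ j = K` is left.
-/

open MvPolynomial Function Nat

/-- Local nilpotency of a self-map. It is stated with iterates of a bare function, so that it
applies to linear maps and to derivations alike. -/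
def IsLocallyNilpotent {M : Type*} [Zero M] (f : M → M) : Prop :=
  ∀ a, ∃ k, f^[k] a = 0

lemma isLocallyNilpotent_iff_pow {R M : Type*} [Semiring R] [AddCommMonoid M] [Module R M]
    {f : Module.End R M} : IsLocallyNilpotent f ↔ ∀ a, ∃ k : ℕ, (f ^ k) a = 0 := by
  simp only [IsLocallyNilpotent, Module.End.pow_apply]

section PartialDerivatives

variable {R σ : Type*}

lemma pderiv_pderiv_comm [CommSemiring R] (i j : σ) (p : MvPolynomial σ R) :
    pderiv i (pderiv j p) = pderiv j (pderiv i p) := by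
  obtain rfl | hij := eq_or_ne i j
  · rfl
  · ext m
    simp only [coeff_pderiv, Finsupp.add_apply, Finsupp.single_eq_of_ne hij,
      Finsupp.single_eq_of_ne hij.symm, add_zero, add_right_comm m, mul_right_comm]

lemma coeff_iterate_pderiv [CommSemiring R] (i : σ) (k : ℕ) (p : MvPolynomial σ R) (m : σ →₀ ℕ) :
    coeff m ((pderiv i)^[k] p) =
      coeff (m + Finsupp.single i k) p * ((m i + 1).ascFactorial k : R) := by
  induction k generalizing m with
  | zero => simp
  | succ k ih =>
    rw [iterate_succ_apply', coeff_pderiv, ih, add_assoc, ← Finsupp.single_add, add_comm 1 k,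
      mul_assoc, ascFactorial_succ, ← succ_ascFactorial]
    simp [mul_comm]

lemma isLocallyNilpotent_pderiv [CommSemiring R] (i : σ) :
    IsLocallyNilpotent (pderiv (R := R) i) := by
  refine fun p => ⟨degreeOf i p + 1, ext _ _ fun m => ?_⟩
  have coeff_eq_zero : coeff (m + Finsupp.single i (degreeOf i p + 1)) p = 0 := by
    by_contra h
    have := monomial_le_degreeOf i (mem_support_iff.mpr h)
    simp at this
    omega
  rw [coeff_iterate_pderiv, coeff_eq_zero, zero_mul, coeff_zero]

lemma totalDegree_pderiv_lt [CommSemiring R] {i : σ} {p : MvPolynomial σ R} (h : pderiv i p ≠ 0) :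
    (pderiv i p).totalDegree < p.totalDegree := by
  obtain ⟨m, hm, hdeg⟩ := Finset.exists_mem_eq_sup _ (support_nonempty.mpr h) Finsupp.degree
  have hm' : m + Finsupp.single i 1 ∈ p.support := by
    rw [mem_support_iff, coeff_pderiv] at hm
    exact mem_support_iff.mpr (left_ne_zero_of_mul hm)
  calc (pderiv i p).totalDegree = m.degree := hdeg
    _ < (m + Finsupp.single i 1).degree := by simp
    _ ≤ p.totalDegree := le_totalDegree hm'

lemma eq_C_of_pderiv_eq_zero [CommSemiring R] [NoZeroDivisors R] [CharZero R]
    {p : MvPolynomial σ R} (h : ∀ i, pderiv i p = 0) : p = C (coeff 0 p) := by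
  classical
  ext m
  rw [coeff_C]
  split_ifs with hm
  · rw [hm]
  · obtain ⟨i, hi⟩ := Finsupp.ne_iff.mp (Ne.symm hm)
    have hcoeff := coeff_pderiv (i := i) p (m - Finsupp.single i 1)
    rw [h i, coeff_zero, Finsupp.sub_add_single_one_cancel hi] at hcoeff
    exact (mul_eq_zero.mp hcoeff.symm).resolve_right (cast_add_one_ne_zero _)

lemma eq_bot_or_eq_top_of_pderiv_mem {K : Type*} [Field K] [CharZero K]
    {I : Ideal (MvPolynomial σ K)} (hI : ∀ p ∈ I, ∀ i, pderiv i p ∈ I) : I = ⊥ ∨ I = ⊤ := by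
  refine or_iff_not_imp_right.mpr fun hne_top => (Submodule.eq_bot_iff I).mpr fun p hp => ?_
  induction hn : p.totalDegree using Nat.strong_induction_on generalizing p with
  | _ n ih =>
    have gradient_eq_zero : ∀ i, pderiv i p = 0 := fun i => by
      by_contra h
      exact h (ih _ (hn ▸ totalDegree_pderiv_lt h) _ (hI p hp i) rfl)
    rw [eq_C_of_pderiv_eq_zero gradient_eq_zero] at hp ⊢
    by_contra hC
    have hcoeff : IsUnit (coeff 0 p) := isUnit_iff_ne_zero.mpr fun h => hC (by rw [h, C_0])
    exact hne_top (I.eq_top_of_isUnit_mem hp (hcoeff.map C))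

end PartialDerivatives

section JointConstants

variable {R A σ : Type*} [CommRing R] [CommRing A] [Algebra R A]

/-- The joint kernel `⋂ i ∈ I, ker (δ i)` of a family of derivations, as a subalgebra. -/
def jointConstants (δ : σ → Derivation R A A) (I : Set σ) : Subalgebra R A where
  carrier := {a | ∀ i ∈ I, δ i a = 0}
  mul_mem' ha hb i hi := by simp [ha i hi, hb i hi]
  add_mem' ha hb i hi := by simp [ha i hi, hb i hi]
  algebraMap_mem' r i _ := (δ i).map_algebraMap r

lemma mem_jointConstants {δ : σ → Derivation R A A} {I : Set σ} {a : A} :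
    a ∈ jointConstants δ I ↔ ∀ i ∈ I, δ i a = 0 :=
  Iff.rfl

lemma iterate_mem_jointConstants {δ : σ → Derivation R A A}
    (hcomm : ∀ i j, Function.Commute (δ i) (δ j)) {I : Set σ} {a : A}
    (ha : a ∈ jointConstants δ I) (i : σ) (n : ℕ) : (δ i)^[n] a ∈ jointConstants δ I :=
  fun j hj => by rw [((hcomm j i).iterate_right n).eq, ha j hj, iterate_map_zero]

lemma iInf_ker_eq_span_one_iff {δ : σ → Derivation R A A} :
    (⨅ i, LinearMap.ker (δ i : A →ₗ[R] A)) = Submodule.span R {1} ↔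
      jointConstants δ Set.univ = ⊥ := by
  have toSubmodule_eq : (⨅ i, LinearMap.ker (δ i : A →ₗ[R] A)) =
      Subalgebra.toSubmodule (jointConstants δ Set.univ) := by
    ext a
    simp [mem_jointConstants]
  rw [toSubmodule_eq, ← Submodule.one_eq_span, ← Algebra.toSubmodule_bot,
    Subalgebra.toSubmodule_injective.eq_iff]

lemma isDerivation_iff {δ : A →ₗ[R] A} :
    IsDerivation δ ↔ ∃ D : Derivation R A A, (D : A →ₗ[R] A) = δ := by
  refine ⟨fun h => ⟨Derivation.mk' δ fun a b => ?_, rfl⟩, ?_⟩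
  · rw [h a b, smul_eq_mul, smul_eq_mul, add_comm, mul_comm b]
  · rintro ⟨D, rfl⟩ a b
    simp [mul_comm, add_comm]

end JointConstants

lemma genericKernels_iff {R A : Type*} [CommRing R] [Ring A] [Algebra R A] {s : ℕ}
    {δ : Fin s → (A →ₗ[R] A)} :
    GenericKernels δ ↔ ∀ i, ∃ a, (∀ j ≠ i, δ j a = 0) ∧ δ i a ≠ 0 := by
  refine ⟨fun h i => ?_, fun h I J hIJ => ?_⟩
  · by_contra! hi
    have kernels_eq : (⨅ j ∈ ({i}ᶜ : Set (Fin s)), LinearMap.ker (δ j)) =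
        ⨅ j ∈ Set.univ, LinearMap.ker (δ j) := by
      ext a
      simp only [Submodule.mem_iInf, LinearMap.mem_ker, Set.mem_compl_singleton_iff, Set.mem_univ,
        forall_true_left]
      exact ⟨fun ha j => (eq_or_ne j i).elim (fun hj => hj ▸ hi a ha) (ha j), fun ha j _ => ha j⟩
    exact (h _ _ kernels_eq ▸ Set.mem_univ i : i ∈ ({i}ᶜ : Set (Fin s))) rfl
  · choose a ha_ne ha_self using h
    have mem_kernel_iff (I : Set (Fin s)) (i : Fin s) :
        a i ∈ (⨅ j ∈ I, LinearMap.ker (δ j)) ↔ i ∉ I := by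
      simp only [Submodule.mem_iInf, LinearMap.mem_ker]
      exact ⟨fun h hi => ha_self i (h i hi),
        fun hi j hj => ha_ne i j (ne_of_mem_of_not_mem hj hi)⟩
    ext i
    rw [← not_iff_not, ← mem_kernel_iff I, hIJ, mem_kernel_iff J]

section Slice

variable {K A : Type*} [Field K] [CommRing A] [Algebra K A] {δ : Derivation K A A} {x : A}

/-- The truncation after order `n` of Dixmier's series `exp (-x δ) a`. When `δ x = 1` and `δ` is
locally nilpotent, the full series is a projection of the algebra onto `ker δ`. -/
def dixmierSum (δ : Derivation K A A) (x : A) (n : ℕ) (a : A) : A :=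
  ∑ m ∈ Finset.range (n + 1), ((-1) ^ m / m ! : K) • (x ^ m * δ^[m] a)

lemma apply_dixmierSum [CharZero K] (hx : δ x = 1) (n : ℕ) (a : A) :
    δ (dixmierSum δ x n a) = ((-1) ^ n / n ! : K) • (x ^ n * δ^[n + 1] a) := by
  induction n with
  | zero => simp [dixmierSum]
  | succ n ih =>
    have hcoeff : ((-1) ^ (n + 1) / (n + 1)! : K) * ((n + 1 : ℕ) : K) = -((-1) ^ n / n !) := by
      rw [factorial_succ, cast_mul, pow_succ]
      field_simp
    have hterm : δ (x ^ (n + 1) * δ^[n + 1] a) =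
        x ^ (n + 1) * δ^[n + 2] a + (n + 1) • (x ^ n * δ^[n + 1] a) := by
      rw [Derivation.leibniz, Derivation.leibniz_pow, hx, iterate_succ_apply' δ (n + 1)]
      simp only [add_tsub_cancel_right, smul_eq_mul, nsmul_eq_mul, mul_one]
      ring
    rw [dixmierSum, Finset.sum_range_succ, ← dixmierSum, map_add, Derivation.map_smul, ih, hterm,
      smul_add, ← cast_smul_eq_nsmul K, smul_smul, hcoeff, neg_smul]
    abel

/-- The slice theorem: `C` is generated by `x` over the constants of `δ` that it contains. -/
lemma subalgebra_le_of_slice [CharZero K] {B C : Subalgebra K A} (hδ : IsLocallyNilpotent δ)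
    (hx : δ x = 1) (hxB : x ∈ B) (hxC : x ∈ C) (hC : ∀ a ∈ C, δ a ∈ C)
    (hCB : ∀ a ∈ C, δ a = 0 → a ∈ B) : C ≤ B := by
  intro a ha
  obtain ⟨n, hn⟩ := hδ a
  induction n generalizing a with
  | zero => exact (show a = 0 from hn) ▸ B.zero_mem
  | succ n ih =>
    have iterate_mem_C (m : ℕ) : δ^[m] a ∈ C := (show Set.MapsTo δ C C from hC).iterate m ha
    have dixmierSum_mem_B : dixmierSum δ x n a ∈ B := by
      refine hCB _ (sum_mem fun m _ => ?_) ?_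
      · exact C.smul_mem (C.mul_mem (C.pow_mem hxC m) (iterate_mem_C m)) _
      · rw [apply_dixmierSum hx, hn, mul_zero, smul_zero]
    have iterate_mem_B (m : ℕ) : δ^[m + 1] a ∈ B := by
      refine ih (iterate_mem_C _) ?_
      rw [← iterate_add_apply, show n + (m + 1) = m + (n + 1) by omega, iterate_add_apply, hn,
        iterate_map_zero]
    rw [dixmierSum, Finset.sum_range_succ'] at dixmierSum_mem_B
    rw [add_mem_cancel_left (sum_mem fun m _ =>
      B.smul_mem (B.mul_mem (B.pow_mem hxB (m + 1)) (iterate_mem_B m)) _)] at dixmierSum_mem_B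
    simpa using dixmierSum_mem_B

end Slice

/-- A family `x` dual to the derivations `δ`, in the way the variables of a polynomial ring are dual
to the partial derivatives. -/
structure IsCoordinateSystem {R A σ : Type*} [CommRing R] [CommRing A] [Algebra R A]
    (δ : σ → Derivation R A A) (x : σ → A) : Prop where
  apply_self (i : σ) : δ i (x i) = 1
  apply_of_ne {i j : σ} (h : j ≠ i) : δ i (x j) = 0

lemma IsCoordinateSystem.map_aeval {R A σ : Type*} [CommRing R] [CommRing A] [Algebra R A]
    {δ : σ → Derivation R A A} {x : σ → A} (hx : IsCoordinateSystem δ x) (i : σ)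
    (p : MvPolynomial σ R) : δ i (aeval x p) = aeval x (pderiv i p) := by
  induction p using MvPolynomial.induction_on with
  | C c => simp
  | add p q hp hq => simp [hp, hq]
  | mul_X p j hp =>
    obtain rfl | hj := eq_or_ne j i
    · simp [hp, hx.apply_self]
    · simp [hp, hx.apply_of_ne hj, pderiv_X_of_ne hj]

section Coordinates

variable {K A σ : Type*} [Field K] [CommRing A] [Algebra K A] {δ : σ → Derivation K A A}

lemma IsCoordinateSystem.aeval_injective [CharZero K] [Nontrivial A] {x : σ → A}
    (hx : IsCoordinateSystem δ x) : Injective (aeval x : MvPolynomial σ K →ₐ[K] A) := by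
  have ker_stable : ∀ p ∈ RingHom.ker (aeval x : MvPolynomial σ K →ₐ[K] A), ∀ i,
      pderiv i p ∈ RingHom.ker (aeval x : MvPolynomial σ K →ₐ[K] A) := fun p hp i => by
    rw [RingHom.mem_ker] at hp ⊢
    rw [← hx.map_aeval, hp, map_zero]
  exact (RingHom.injective_iff_ker_eq_bot _).mpr
    ((eq_bot_or_eq_top_of_pderiv_mem ker_stable).resolve_right (RingHom.ker_ne_top _))

lemma IsCoordinateSystem.jointConstants_compl_le_adjoin [CharZero K] {x : σ → A}
    (hx : IsCoordinateSystem δ x) (hcomm : ∀ i j, Function.Commute (δ i) (δ j))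
    (hnil : ∀ i, IsLocallyNilpotent (δ i)) (hconst : jointConstants δ Set.univ = ⊥)
    (S : Finset σ) : jointConstants δ (↑S)ᶜ ≤ Algebra.adjoin K (Set.range x) := by
  classical
  induction S using Finset.induction_on with
  | empty => simp [hconst]
  | insert i S _ ih =>
    refine subalgebra_le_of_slice (hnil i) (hx.apply_self i) (Algebra.subset_adjoin ⟨i, rfl⟩)
      (fun j hj => hx.apply_of_ne fun hij => hj (by simp [hij]))
      (fun a ha => iterate_mem_jointConstants hcomm ha i 1) fun a ha hia => ih fun j hj => ?_
    obtain rfl | hji := eq_or_ne j i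
    · exact hia
    · exact ha j (by simpa [hji] using hj)

lemma IsCoordinateSystem.aeval_surjective [CharZero K] [Finite σ] {x : σ → A}
    (hx : IsCoordinateSystem δ x) (hcomm : ∀ i j, Function.Commute (δ i) (δ j))
    (hnil : ∀ i, IsLocallyNilpotent (δ i)) (hconst : jointConstants δ Set.univ = ⊥) :
    Surjective (aeval x : MvPolynomial σ K →ₐ[K] A) := by
  cases nonempty_fintype σ
  rw [← AlgHom.range_eq_top, ← Algebra.adjoin_range_eq_range_aeval, eq_top_iff]
  exact fun a _ => hx.jointConstants_compl_le_adjoin hcomm hnil hconst Finset.univ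
    (by simp [mem_jointConstants])

lemma exists_apply_eq_one (hcomm : ∀ i j, Function.Commute (δ i) (δ j))
    (hconst : jointConstants δ Set.univ = ⊥) {i : σ} (hnil : IsLocallyNilpotent (δ i)) {a : A}
    (ha : a ∈ jointConstants δ {i}ᶜ) (hia : δ i a ≠ 0) :
    ∃ y ∈ jointConstants δ {i}ᶜ, δ i y = 1 := by
  obtain ⟨n, hn, hn'⟩ := exists_not_and_succ_of_not_zero_of_exists
    (p := fun n => (δ i)^[n] (δ i a) = 0) hia (hnil _)
  rw [← iterate_succ_apply, iterate_succ_apply'] at hn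
  rw [← iterate_succ_apply, iterate_succ_apply', iterate_succ_apply'] at hn'
  set b := (δ i)^[n] a
  have hb : b ∈ jointConstants δ {i}ᶜ := iterate_mem_jointConstants hcomm ha i n
  have apply_mem_bot : δ i b ∈ (⊥ : Subalgebra K A) := hconst ▸ fun j _ => by
    obtain rfl | hj := eq_or_ne j i
    · exact hn'
    · exact iterate_mem_jointConstants hcomm hb i 1 j hj
  obtain ⟨c, hc⟩ := Algebra.mem_bot.mp apply_mem_bot
  have hc_ne : c ≠ 0 := fun h => hn (by rw [← hc, h, map_zero])
  refine ⟨c⁻¹ • b, Subalgebra.smul_mem _ hb _, ?_⟩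
  rw [Derivation.map_smul, ← hc, Algebra.algebraMap_eq_smul_one, inv_smul_smul₀ hc_ne]

lemma exists_isCoordinateSystem (hcomm : ∀ i j, Function.Commute (δ i) (δ j))
    (hnil : ∀ i, IsLocallyNilpotent (δ i)) (hconst : jointConstants δ Set.univ = ⊥)
    (hsep : ∀ i, ∃ a, (∀ j ≠ i, δ j a = 0) ∧ δ i a ≠ 0) : ∃ x, IsCoordinateSystem δ x := by
  have exists_dual (i : σ) : ∃ y ∈ jointConstants δ {i}ᶜ, δ i y = 1 :=
    let ⟨_, ha, hia⟩ := hsep i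
    exists_apply_eq_one hcomm hconst (hnil i) ha hia
  choose x hx_mem hx_self using exists_dual
  exact ⟨x, hx_self, fun h => hx_mem _ _ h.symm⟩

end Coordinates

section Transport

variable {R A σ : Type*} [CommRing R] [CommRing A] [Algebra R A] (e : A ≃ₐ[R] MvPolynomial σ R)

/-- The partial derivative `∂ i` carried over to `A` by an isomorphism with a polynomial ring. -/
noncomputable def pderivAlong (i : σ) : Derivation R A A :=
  Derivation.mk' (e.symm.toLinearEquiv.conj (pderiv i : Derivation R _ _).toLinearMap)
    fun a b => e.injective (by simp [LinearEquiv.conj_apply])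

lemma map_pderivAlong (i : σ) (a : A) : e (pderivAlong e i a) = pderiv i (e a) :=
  e.apply_symm_apply _

lemma pderivAlong_commute (i j : σ) : Function.Commute (pderivAlong e i) (pderivAlong e j) :=
  fun a => e.injective (by simp only [map_pderivAlong, pderiv_pderiv_comm i j])

lemma isLocallyNilpotent_pderivAlong (i : σ) : IsLocallyNilpotent (pderivAlong e i) := fun a => by
  obtain ⟨k, hk⟩ := isLocallyNilpotent_pderiv i (e a)
  refine ⟨k, e.injective ?_⟩
  rw [(Semiconj.iterate_right (map_pderivAlong e i) k).eq, hk, map_zero]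

lemma isCoordinateSystem_pderivAlong :
    IsCoordinateSystem (pderivAlong e) fun i => e.symm (X i) where
  apply_self i := e.injective (by simp [map_pderivAlong])
  apply_of_ne h := e.injective (by simp [map_pderivAlong, pderiv_X_of_ne h])

lemma jointConstants_pderivAlong_univ [NoZeroDivisors R] [CharZero R] :
    jointConstants (pderivAlong e) Set.univ = ⊥ := by
  refine eq_bot_iff.mpr fun a ha => Algebra.mem_bot.mpr ⟨coeff 0 (e a), e.injective ?_⟩
  have gradient_eq_zero (i : σ) : pderiv i (e a) = 0 := by
    rw [← map_pderivAlong, ha i trivial, map_zero]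
  rw [e.commutes, algebraMap_eq, ← eq_C_of_pderiv_eq_zero gradient_eq_zero]

end Transport

/-- **Corollary (characterization of polynomial algebras).** A commutative
`K`-algebra `A` (char `K = 0`, `s ≥ 1`) admits `s` nonzero commuting locally
nilpotent `K`-derivations with generic kernels and joint kernel `K·1` if and
only if `A` is isomorphic to the polynomial algebra `K[X_1, …, X_s]`. -/
theorem polynomial_algebra_characterization
    {K A : Type*} [Field K] [CharZero K] [CommRing A] [Algebra K A]
    (s : ℕ) (hs : 1 ≤ s) :
    (∃ δ : Fin s → (A →ₗ[K] A),
      (∀ i, IsDerivation (δ i)) ∧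
      (∀ i, δ i ≠ 0) ∧
      (∀ i j, (δ i).comp (δ j) = (δ j).comp (δ i)) ∧
      (∀ i (a : A), ∃ k : ℕ, (δ i ^ k) a = 0) ∧
      GenericKernels δ ∧
      (⨅ i, LinearMap.ker (δ i)) = Submodule.span K {(1 : A)}) ↔
    Nonempty (A ≃ₐ[K] MvPolynomial (Fin s) K) := by
  constructor
  · rintro ⟨δ, hder, -, hcomm, hnil, hgen, hker⟩
    choose D hD using fun i => isDerivation_iff.mp (hder i)
    obtain rfl : (fun i => (D i : A →ₗ[K] A)) = δ := funext hD
    have hcomm' (i j) : Function.Commute (D i) (D j) := LinearMap.congr_fun (hcomm i j)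
    have hnil' (i) : IsLocallyNilpotent (D i) := isLocallyNilpotent_iff_pow.mpr (hnil i)
    have hconst := iInf_ker_eq_span_one_iff.mp hker
    obtain ⟨x, hx⟩ := exists_isCoordinateSystem hcomm' hnil' hconst (genericKernels_iff.mp hgen)
    have : Nontrivial A :=
      let ⟨a, _, ha⟩ := genericKernels_iff.mp hgen ⟨0, hs⟩
      nontrivial_of_ne _ _ ha
    exact ⟨(AlgEquiv.ofBijective (aeval x)
      ⟨hx.aeval_injective, hx.aeval_surjective hcomm' hnil' hconst⟩).symm⟩
  · rintro ⟨e⟩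
    have hx := isCoordinateSystem_pderivAlong e
    have := e.toEquiv.nontrivial
    have apply_ne_zero (i) : pderivAlong e i (e.symm (X i)) ≠ 0 := by simp [hx.apply_self i]
    exact ⟨fun i => pderivAlong e i, fun i => isDerivation_iff.mpr ⟨_, rfl⟩,
      fun i h => apply_ne_zero i (LinearMap.congr_fun h _),
      fun i j => LinearMap.ext (pderivAlong_commute e i j),
      fun i => isLocallyNilpotent_iff_pow.mp (isLocallyNilpotent_pderivAlong e i),
      genericKernels_iff.mpr fun i => ⟨_, fun j hj => hx.apply_of_ne hj.symm, apply_ne_zero i⟩,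
      iInf_ker_eq_span_one_iff.mpr (jointConstants_pderivAlong_univ e)⟩
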